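/- arXiv:1202.2287 — 2 statements merged into one kernel-verified Lean document; each statement's English description precedes it below -/
import Mathlib

section
/- For a dcpo Y the following are equivalent: (i) Y is an ωQRB-domain; (ii) Y is a quasi-retract of an ωB-domain; (iii) Y is the image of an ωB-domain under a proper map. -/
/-!
A proper surjection is a quasi-retraction, its fibres `r⁻¹(↑y)` forming the quasi-section
(`quasiRetraction_of_proper`). If `r : X → Y` is a quasi-retraction with quasi-section `ς` and
`f i` are the deflations of `X`, then the maps `y ↦ ↑r(f i (ς y))` are quasi-deflations on `Y`;
they generate because `ς y` is compact (`omegaQRB_of_quasiRetract`).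

The substance is that an ωQRB-domain `Y` is a proper image of an ωB-domain. By countability one
may take a decreasing sequence of quasi-deflations `φ n`, with finite sets `A n` containing
generators of all the values of `φ n`. Let `X` be the domain of finite and infinite words
`w₀ ≤ w₁ ≤ ⋯` with `wₙ ∈ A n` and `wₙ ∈ φ n (wₘ)` for `n ≤ m`, under the prefix order. It is a
finitely branching tree, so truncation to length `n` is an idempotent deflation, and `X` is an
ωB-domain. The map `r` sends a word to the supremum of its letters (`⊥` for the empty word).

* If `r w ≥ y` then `wₙ ∈ φ n y` for each letter of `w` (`QDSeq.mem_phi_eval`). Conversely, if `w`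
  is infinite and `wₙ ∈ φ n y` for all `n`, then `r w ∈ ⋂ φ n y = ↑y`.
* `r` is surjective: since `φ (n + 1) y ⊆ φ n y`, chains of letters `wₙ ∈ φ n y` below `y` are
  found backwards from the last letter, and Kőnig's lemma turns them into an infinite word
  whose supremum is `y`.
* `r` is proper: by Kőnig's lemma, an open set containing the fibre `r⁻¹(↑y)` contains all words
  with enough letters `wᵢ ∈ φ i y` (`QDSeq.exists_length`). Only finitely many words are shorter,
  and each `φ i` is eventually constant along a directed set.
-/

open Set TopologicalSpace

universe u v

section ScottTopology

variable {α : Type u}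

/-- A Scott-open subset of a preorder: an upward-closed set that is inaccessible by
directed suprema. -/
def ScottOpen [Preorder α] (U : Set α) : Prop :=
  IsUpperSet U ∧ ∀ d : Set α, d.Nonempty → DirectedOn (· ≤ ·) d →
    ∀ a : α, IsLUB d a → a ∈ U → (d ∩ U).Nonempty

/-- The Scott topology on a preorder. -/
def scottTop (α : Type u) [Preorder α] : TopologicalSpace α where
  IsOpen := ScottOpen
  isOpen_univ := by
    refine ⟨isUpperSet_univ, ?_⟩
    intro d hd _ a _ _
    obtain ⟨x, hx⟩ := hd
    exact ⟨x, hx, trivial⟩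
  isOpen_inter := by
    rintro U V ⟨hU, hU'⟩ ⟨hV, hV'⟩
    refine ⟨hU.inter hV, ?_⟩
    intro d hd hdir a ha hmem
    obtain ⟨x, hxd, hxU⟩ := hU' d hd hdir a ha hmem.1
    obtain ⟨y, hyd, hyV⟩ := hV' d hd hdir a ha hmem.2
    obtain ⟨z, hzd, hxz, hyz⟩ := hdir x hxd y hyd
    exact ⟨z, hzd, hU hxz hxU, hV hyz hyV⟩
  isOpen_sUnion := by
    intro S hS
    constructor
    · intro a b hab ha
      obtain ⟨U, hUS, haU⟩ := ha
      exact ⟨U, hUS, (hS U hUS).1 hab haU⟩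
    · intro d hd hdir a ha hmem
      obtain ⟨U, hUS, haU⟩ := hmem
      obtain ⟨x, hxd, hxU⟩ := (hS U hUS).2 d hd hdir a ha haU
      exact ⟨x, hxd, U, hUS, hxU⟩

/-- A dcpo: every nonempty directed subset has a least upper bound. -/
def IsDcpo (α : Type u) [Preorder α] : Prop :=
  ∀ d : Set α, d.Nonempty → DirectedOn (· ≤ ·) d → ∃ a : α, IsLUB d a

/-- The upward closure `↑E = {x | ∃ e ∈ E, e ≤ x}` of a set. -/
def upClos [Preorder α] (E : Set α) : Set α := {x | ∃ e ∈ E, e ≤ x}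

/-- A finitary compact: a set of the form `↑E` with `E` finite and nonempty. -/
def IsFinitaryCompact [Preorder α] (A : Set α) : Prop :=
  ∃ E : Set α, E.Finite ∧ E.Nonempty ∧ A = upClos E

/-- `Fin(α)`: the nonempty finitary compacts of `α`, ordered by reverse inclusion. -/
def FinCompacts (α : Type u) [Preorder α] : Type u := {A : Set α // IsFinitaryCompact A}

instance FinCompacts.instPartialOrder [Preorder α] : PartialOrder (FinCompacts α) where
  le A B := B.1 ⊆ A.1
  le_refl A := subset_rfl
  le_trans A B C h1 h2 := subset_trans h2 h1
  le_antisymm A B h1 h2 := Subtype.ext (subset_antisymm h2 h1)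

/-- `U ⋘ x`: every directed family whose least upper bound is above `x` has some
member in `U`. -/
def approxes [Preorder α] (U : Set α) (x : α) : Prop :=
  ∀ d : Set α, d.Nonempty → DirectedOn (· ≤ ·) d →
    ∀ a : α, IsLUB d a → x ≤ a → ∃ z ∈ d, z ∈ U

/-- A quasi-deflation: a map `φ : α → Fin_σ(α)`, continuous for the Scott topologies,
such that `x ∈ φ x` for every `x`, and with finite image. -/
def IsQuasiDeflation [Preorder α] (φ : α → FinCompacts α) : Prop :=
  @Continuous α (FinCompacts α) (scottTop α) (scottTop (FinCompacts α)) φ ∧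
  (∀ x : α, x ∈ (φ x).1) ∧ (Set.range φ).Finite

/-- A generating family of quasi-deflations: a (nonempty) family of quasi-deflations,
directed in the pointwise reverse-inclusion order, with `⋂ i, φ i x = ↑x` for all `x`. -/
def IsGeneratingFamily [Preorder α] {I : Type v} (φ : I → α → FinCompacts α) : Prop :=
  Nonempty I ∧
  (∀ i j : I, ∃ k : I, (∀ x, (φ k x).1 ⊆ (φ i x).1) ∧ (∀ x, (φ k x).1 ⊆ (φ j x).1)) ∧
  (∀ i, IsQuasiDeflation (φ i)) ∧
  (∀ x : α, (⋂ i, (φ i x).1) = Set.Ici x)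

/-- A QRB-domain: a pointed dcpo with a generating family of quasi-deflations. -/
def IsQRBDomain (α : Type u) [PartialOrder α] : Prop :=
  IsDcpo α ∧ (∃ b : α, ∀ x, b ≤ x) ∧
  ∃ (I : Type u) (φ : I → α → FinCompacts α), IsGeneratingFamily φ

/-- An ωQRB-domain: a pointed dcpo with a countable generating family of
quasi-deflations. -/
def IsOmegaQRBDomain (α : Type u) [PartialOrder α] : Prop :=
  IsDcpo α ∧ (∃ b : α, ∀ x, b ≤ x) ∧
  ∃ (I : Type u), Countable I ∧
    ∃ φ : I → α → FinCompacts α, IsGeneratingFamily φ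

/-- A deflation on a pointed dcpo: a Scott-continuous map below the identity, with
finite image. -/
def IsDeflation [Preorder α] (f : α → α) : Prop :=
  @Continuous α α (scottTop α) (scottTop α) f ∧ (∀ x, f x ≤ x) ∧ (Set.range f).Finite

/-- An RB-domain: a pointed dcpo with a directed family of deflations whose pointwise
least upper bound is the identity. -/
def IsRBDomain (α : Type u) [PartialOrder α] : Prop :=
  IsDcpo α ∧ (∃ b : α, ∀ x, b ≤ x) ∧
  ∃ (I : Type u) (f : I → α → α), Nonempty I ∧
    (∀ i j : I, ∃ k : I, (∀ x, f i x ≤ f k x) ∧ (∀ x, f j x ≤ f k x)) ∧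
    (∀ i, IsDeflation (f i)) ∧
    ∀ x : α, IsLUB (Set.range fun i => f i x) x

/-- An ωB-domain (SFP-domain): a pointed dcpo with a non-decreasing sequence of
idempotent deflations whose pointwise least upper bound is the identity. -/
def IsOmegaBDomain (α : Type u) [PartialOrder α] : Prop :=
  IsDcpo α ∧ (∃ b : α, ∀ x, b ≤ x) ∧
  ∃ f : ℕ → α → α,
    (∀ i, IsDeflation (f i)) ∧
    (∀ i, ∀ x, f i (f i x) = f i x) ∧
    (∀ i j : ℕ, i ≤ j → ∀ x, f i x ≤ f j x) ∧
    ∀ x : α, IsLUB (Set.range fun i => f i x) x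

/-- A map finitely separated from the identity. -/
def IsFinitelySeparated [Preorder α] (f : α → α) : Prop :=
  ∃ M : Set α, M.Finite ∧ ∀ x : α, ∃ m ∈ M, f x ≤ m ∧ m ≤ x

/-- An FS-domain: a pointed dcpo with a directed family of continuous maps, each
finitely separated from the identity, whose pointwise least upper bound is the
identity. -/
def IsFSDomain (α : Type u) [PartialOrder α] : Prop :=
  IsDcpo α ∧ (∃ b : α, ∀ x, b ≤ x) ∧
  ∃ (I : Type u) (f : I → α → α), Nonempty I ∧
    (∀ i j : I, ∃ k : I, (∀ x, f i x ≤ f k x) ∧ (∀ x, f j x ≤ f k x)) ∧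
    (∀ i, @Continuous α α (scottTop α) (scottTop α) (f i) ∧ IsFinitelySeparated (f i)) ∧
    ∀ x : α, IsLUB (Set.range fun i => f i x) x

/-- A controlled QRB-domain: a pointed dcpo with a directed family of controlled
quasi-deflations `(f i, φ i)` (i.e. `φ i x ⊆ ↑(f i x)`) with `x = sup_i f i x`. -/
def IsControlledQRBDomain (α : Type u) [PartialOrder α] : Prop :=
  IsDcpo α ∧ (∃ b : α, ∀ x, b ≤ x) ∧
  ∃ (I : Type u) (f : I → α → α) (φ : I → α → FinCompacts α), Nonempty I ∧
    (∀ i j : I, ∃ k : I,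
      ((∀ x, f i x ≤ f k x) ∧ ∀ x, (φ k x).1 ⊆ (φ i x).1) ∧
      ((∀ x, f j x ≤ f k x) ∧ ∀ x, (φ k x).1 ⊆ (φ j x).1)) ∧
    (∀ i, @Continuous α α (scottTop α) (scottTop α) (f i) ∧ IsQuasiDeflation (φ i) ∧
      ∀ x, (φ i x).1 ⊆ Set.Ici (f i x)) ∧
    ∀ x : α, IsLUB (Set.range fun i => f i x) x

/-- A continuous dcpo: for every `x`, the set of elements way-below `x` is
(nonempty and) directed and has `x` as least upper bound. -/
def IsContinuousDcpo (α : Type u) [Preorder α] : Prop :=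
  IsDcpo α ∧ ∀ x : α,
    {y : α | approxes (Set.Ici y) x}.Nonempty ∧
    DirectedOn (· ≤ ·) {y : α | approxes (Set.Ici y) x} ∧
    IsLUB {y : α | approxes (Set.Ici y) x} x

/-- The finitary compacts `↑E` (E finite nonempty) that approximate `x`. -/
def finUpsBelow [Preorder α] (x : α) : Set (Set α) :=
  {A | (∃ E : Set α, E.Finite ∧ E.Nonempty ∧ A = upClos E) ∧ approxes A x}

/-- A quasi-continuous dcpo. -/
def IsQuasiContinuous (α : Type u) [Preorder α] : Prop :=
  IsDcpo α ∧ ∀ x : α,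
    (finUpsBelow x).Nonempty ∧
    DirectedOn (fun A B : Set α => B ⊆ A) (finUpsBelow x) ∧
    ⋂₀ finUpsBelow x = Set.Ici x

/-- The upper Vietoris topology on `Fin(α)` (the subspace topology induced from the
Smyth powerspace of `α` with its Scott topology), generated by the sets
`◻U = {↑E | ↑E ⊆ U}` for `U` Scott-open. -/
def finUpperVietoris (α : Type u) [Preorder α] : TopologicalSpace (FinCompacts α) :=
  TopologicalSpace.generateFrom
    {S | ∃ U : Set α, ScottOpen U ∧ S = {A : FinCompacts α | A.1 ⊆ U}}

end ScottTopology

section Spaces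

variable {X : Type u} {Y : Type v}

/-- The specialization preorder of a topological space: `x ≤ y` iff every open set
containing `x` contains `y`. -/
def specLE [TopologicalSpace X] (x y : X) : Prop :=
  ∀ U : Set X, IsOpen U → x ∈ U → y ∈ U

/-- `↑x` in the specialization preorder. -/
def specUp [TopologicalSpace X] (x : X) : Set X := {y | specLE x y}

/-- Upward closure of a set in the specialization preorder. -/
def specUpSet [TopologicalSpace X] (A : Set X) : Set X := {y | ∃ a ∈ A, specLE a y}

/-- Downward closure of a set in the specialization preorder. -/
def specDownSet [TopologicalSpace X] (A : Set X) : Set X := {x | ∃ a ∈ A, specLE x a}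

/-- A saturated set: one that is upward closed in the specialization preorder. -/
def IsSaturatedSet [TopologicalSpace X] (A : Set X) : Prop :=
  ∀ x ∈ A, ∀ y : X, specLE x y → y ∈ A

/-- A coherent space: the intersection of any two compact saturated subsets is
compact. -/
def IsCoherent (X : Type u) [TopologicalSpace X] : Prop :=
  ∀ Q₁ Q₂ : Set X, IsCompact Q₁ → IsSaturatedSet Q₁ → IsCompact Q₂ → IsSaturatedSet Q₂ →
    IsCompact (Q₁ ∩ Q₂)

/-- A stably compact space: T0, compact, locally compact, sober and coherent. -/
def IsStablyCompact (X : Type u) [TopologicalSpace X] : Prop :=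
  T0Space X ∧ CompactSpace X ∧ LocallyCompactSpace X ∧ QuasiSober X ∧ IsCoherent X

/-- A proper map: continuous, the downward closure of the image of any closed set is
closed, and the preimage of `↑y` is compact for every `y`. -/
def PaperProper [TopologicalSpace X] [TopologicalSpace Y] (r : X → Y) : Prop :=
  Continuous r ∧
  (∀ F : Set X, IsClosed F → IsClosed (specDownSet (r '' F))) ∧
  ∀ y : Y, IsCompact (r ⁻¹' specUp y)

/-- The Smyth powerspace: nonempty compact saturated subsets. -/
def SmythP (X : Type u) [TopologicalSpace X] : Type u :=
  {Q : Set X // Q.Nonempty ∧ IsCompact Q ∧ IsSaturatedSet Q}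

/-- The upper Vietoris topology on the Smyth powerspace, generated by the sets
`◻U = {Q | Q ⊆ U}`, `U` open. -/
instance SmythP.instTopologicalSpace [TopologicalSpace X] : TopologicalSpace (SmythP X) :=
  TopologicalSpace.generateFrom
    {S | ∃ U : Set X, IsOpen U ∧ S = {Q : SmythP X | Q.1 ⊆ U}}

/-- The order on the Smyth powerspace: reverse inclusion. -/
instance SmythP.instPartialOrder [TopologicalSpace X] : PartialOrder (SmythP X) where
  le Q Q' := Q'.1 ⊆ Q.1
  le_refl Q := subset_rfl
  le_trans Q Q' Q'' h1 h2 := subset_trans h2 h1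
  le_antisymm Q Q' h1 h2 := Subtype.ext (subset_antisymm h2 h1)

/-- A quasi-retraction `r : X → Y`: a continuous map admitting a continuous
quasi-section `ς : Y → S_V(X)` with `↑{r x | x ∈ ς y} = ↑y` for every `y`. -/
def IsQuasiRetraction [TopologicalSpace X] [TopologicalSpace Y] (r : X → Y) : Prop :=
  Continuous r ∧
  ∃ ς : Y → SmythP X, Continuous ς ∧ ∀ y : Y, specUpSet (r '' (ς y).1) = specUp y

/-- The specialization ordering of a T0 space, as a partial order. -/
def specOrder (X : Type u) [TopologicalSpace X] [T0Space X] : PartialOrder X where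
  le := specLE
  le_refl x := fun _ _ h => h
  le_trans x y z h1 h2 := fun U hU hx => h2 U hU (h1 U hU hx)
  le_antisymm x y h1 h2 :=
    (inseparable_iff_forall_isOpen.mpr fun U hU => ⟨h1 U hU, h2 U hU⟩).eq

/-- A continuous probability valuation on a topological space: a map from opens to
nonnegative reals that is strict, monotone, modular, continuous (preserves directed
suprema of opens) and normalized. -/
structure IsProbValuation [TopologicalSpace X] (ν : Opens X → NNReal) : Prop where
  empty : ν ⊥ = 0
  mono : ∀ U V : Opens X, U ≤ V → ν U ≤ ν V
  modular : ∀ U V : Opens X, ν (U ⊔ V) + ν (U ⊓ V) = ν U + ν V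
  scont : ∀ S : Set (Opens X), S.Nonempty → DirectedOn (· ≤ ·) S →
    ν (sSup S) = ⨆ U ∈ S, ν U
  total : ν ⊤ = 1

/-- `V_1(X)`: the probability valuations on `X`, ordered pointwise. -/
abbrev ProbVal (X : Type u) [TopologicalSpace X] : Type u :=
  {ν : Opens X → NNReal // IsProbValuation ν}

/-- The weak topology on `V_1(X)`, generated by the sets `[U > a]`. -/
def weakTop (X : Type u) [TopologicalSpace X] : TopologicalSpace (ProbVal X) :=
  TopologicalSpace.generateFrom
    {S | ∃ (U : Opens X) (a : ℝ), S = {ν : ProbVal X | a < (ν.1 U : ℝ)}}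

/-- `ν†(Q) = inf {ν U | U open, Q ⊆ U}`. -/
noncomputable def dagVal [TopologicalSpace X] (ν : Opens X → NNReal) (Q : Set X) :
    NNReal :=
  ⨅ U : {U : Opens X // Q ⊆ U.1}, ν U.1

end Spaces

section Paths

variable {Y : Type u}

/-- A path in a pointed poset: a finite covering chain starting at the least
element. -/
def IsPathIn [PartialOrder Y] (bot : Y) (S : Set Y) : Prop :=
  ∃ (n : ℕ) (c : Fin (n + 1) → Y), c 0 = bot ∧
    (∀ i : Fin n, c i.castSucc ⋖ c i.succ) ∧ S = Set.range c

/-- The path space `Π(Y)` of a pointed poset, ordered by inclusion. -/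
abbrev PathSpace (Y : Type u) [PartialOrder Y] (bot : Y) : Type u :=
  {S : Set Y // IsPathIn bot S}

end Paths

section Proof

/-! ### Scott-topological preliminaries -/

theorem scottOpen_not_le {α : Type u} [Preorder α] (y : α) : ScottOpen {w : α | ¬ w ≤ y} := by
  refine ⟨fun a b hab ha hb => ha (hab.trans hb), ?_⟩
  intro d _ _ a ha hay
  by_contra hne
  refine hay (ha.2 fun z hz => ?_)
  by_contra hzy
  exact hne ⟨z, hz, hzy⟩

/-- The specialization preorder of the Scott topology is the original order. -/
theorem specLE_scott {α : Type u} [Preorder α] {x y : α} :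
    @specLE α (scottTop α) x y ↔ x ≤ y := by
  constructor
  · intro h
    by_contra hxy
    exact h {w | ¬ w ≤ y} (scottOpen_not_le y) hxy le_rfl
  · intro h U hU hx
    exact hU.1 h hx

theorem specUp_scott {α : Type u} [Preorder α] (y : α) :
    @specUp α (scottTop α) y = Set.Ici y :=
  Set.ext fun _ => specLE_scott

theorem scott_continuous_iff {α : Type u} {β : Type v} [Preorder α] [Preorder β] {f : α → β} :
    @Continuous α β (scottTop α) (scottTop β) f ↔
      ∀ V : Set β, ScottOpen V → ScottOpen (f ⁻¹' V) :=
  @continuous_def α β (scottTop α) (scottTop β) f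

theorem scott_continuous_monotone {α : Type u} {β : Type v} [Preorder α] [Preorder β]
    {f : α → β} (hf : @Continuous α β (scottTop α) (scottTop β) f) : Monotone f := by
  intro a b hab
  by_contra h
  have hV : ScottOpen (f ⁻¹' {w | ¬ w ≤ f b}) :=
    scott_continuous_iff.1 hf _ (scottOpen_not_le (f b))
  exact hV.1 hab h le_rfl

/-- A monotone map with finite image attains its largest value on a directed set. -/
theorem exists_max_of_finite_range {α : Type u} {β : Type v} [Preorder α] [PartialOrder β]
    {f : α → β} (hf : Monotone f) (hfin : (Set.range f).Finite) {d : Set α} (hd : d.Nonempty)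
    (hdir : DirectedOn (· ≤ ·) d) : ∃ y₀ ∈ d, ∀ y ∈ d, f y ≤ f y₀ := by
  have hfi : (f '' d).Finite := hfin.subset (Set.image_subset_range f d)
  obtain ⟨b, hb⟩ := hfi.exists_maximal (hd.image f)
  obtain ⟨y₀, hy₀, rfl⟩ := hb.1
  refine ⟨y₀, hy₀, fun y hy => ?_⟩
  obtain ⟨z, hz, h1, h2⟩ := hdir y₀ hy₀ y hy
  exact (hf h2).trans (hb.2 ⟨z, hz, rfl⟩ (hf h1))

/-- A Scott-continuous map with finite image is eventually constant along a directed set. -/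
theorem exists_eq_of_finite_range {α : Type u} {β : Type v} [Preorder α] [PartialOrder β]
    {f : α → β} (hf : @Continuous α β (scottTop α) (scottTop β) f)
    (hfin : (Set.range f).Finite) {d : Set α} (hd : d.Nonempty)
    (hdir : DirectedOn (· ≤ ·) d) {a : α} (ha : IsLUB d a) : ∃ y ∈ d, f y = f a := by
  have hm := scott_continuous_monotone hf
  obtain ⟨y₀, hy₀, hmax⟩ := exists_max_of_finite_range hm hfin hd hdir
  refine ⟨y₀, hy₀, le_antisymm (hm (ha.1 hy₀)) ?_⟩
  by_contra h
  have hV : ScottOpen (f ⁻¹' {w | ¬ w ≤ f y₀}) :=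
    scott_continuous_iff.1 hf _ (scottOpen_not_le (f y₀))
  obtain ⟨z, hz, hz'⟩ := hV.2 d hd hdir a ha h
  exact hz' (hmax z hz)

theorem upClos_upper {α : Type u} [Preorder α] {A : Set α} (hA : IsFinitaryCompact A) :
    IsUpperSet A := by
  obtain ⟨E, _, _, rfl⟩ := hA
  rintro a b hab ⟨e, he, hea⟩
  exact ⟨e, he, hea.trans hab⟩

/-! ### Proper surjections are quasi-retractions -/

/-- The fibres `r⁻¹(↑y)` of a proper surjection form a quasi-section. -/
theorem quasiRetraction_of_proper {X : Type u} {Y : Type v} [TopologicalSpace X]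
    [TopologicalSpace Y] {r : X → Y} (hr : PaperProper r) (hs : Function.Surjective r) :
    IsQuasiRetraction r := by
  obtain ⟨hc, hcl, hk⟩ := hr
  have hspec : ∀ {x x' : X}, specLE x x' → specLE (r x) (r x') := fun h U hU hx =>
    h _ (hU.preimage hc) hx
  refine ⟨hc, fun y => ⟨r ⁻¹' specUp y, ?_, hk y, ?_⟩, ?_, ?_⟩
  · obtain ⟨x, rfl⟩ := hs y
    exact ⟨x, fun U _ h => h⟩
  · intro x hx x' hxx' U hU hy
    exact hspec hxx' U hU (hx U hU hy)
  · refine continuous_generateFrom_iff.2 ?_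
    rintro _ ⟨U, hU, rfl⟩
    have := (hcl Uᶜ hU.isClosed_compl).isOpen_compl
    convert this using 1
    ext y
    constructor
    · rintro h ⟨_, ⟨x, hx, rfl⟩, hyx⟩
      exact hx (h hyx)
    · intro h x hx
      by_contra hxU
      exact h ⟨r x, ⟨x, hxU, rfl⟩, hx⟩
  · intro y
    ext z
    constructor
    · rintro ⟨_, ⟨x, hx, rfl⟩, hz⟩ U hU hy
      exact hz U hU (hx U hU hy)
    · intro hz
      obtain ⟨x, rfl⟩ := hs z
      exact ⟨r x, ⟨x, hz, rfl⟩, fun U _ h => h⟩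

/-! ### Quasi-retracts of ωB-domains -/

/-- An upward-closed set is the intersection of its Scott-open neighbourhoods. -/
theorem subset_of_scottOpen_nhds {α : Type u} [Preorder α] {A B : Set α} (hA : IsUpperSet A)
    (h : ∀ U : Set α, ScottOpen U → A ⊆ U → B ⊆ U) : B ⊆ A := by
  intro b hb
  by_contra hbA
  refine h {w | ¬ w ≤ b} (scottOpen_not_le b) ?_ hb le_rfl
  intro a ha hab
  exact hbA (hA hab ha)

/-- The quasi-deflations are `φ i y = ↑(r (f i (ς y)))`, for `f i` the deflations of the
ωB-domain and `ς` the quasi-section. -/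
theorem omegaQRB_of_quasiRetract {X Y : Type u} [PartialOrder X] [PartialOrder Y]
    (hY : IsDcpo Y) (hX : IsOmegaBDomain X) {r : X → Y}
    (hr : @IsQuasiRetraction X Y (scottTop X) (scottTop Y) r) : IsOmegaQRBDomain Y := by
  obtain ⟨_, ⟨bot, hbot⟩, f, hf, -, hfmono, hfsup⟩ := hX
  let tX := scottTop X
  let tY := scottTop Y
  obtain ⟨hc, ς, hς, hsec⟩ := hr
  have hrm : Monotone r := scott_continuous_monotone hc
  have hsec' : ∀ y z, y ≤ z ↔ ∃ x ∈ (ς y).1, r x ≤ z := by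
    intro y z
    have h := Set.ext_iff.1 (hsec y) z
    rw [specUp_scott] at h
    rw [← Set.mem_Ici, ← h]
    constructor
    · rintro ⟨_, ⟨x, hx, rfl⟩, hz⟩
      exact ⟨x, hx, specLE_scott.1 hz⟩
    · rintro ⟨x, hx, hz⟩
      exact ⟨r x, ⟨x, hx, rfl⟩, specLE_scott.2 hz⟩
  have hfc : ∀ (i : ℕ) y, IsFinitaryCompact (upClos ((fun x => r (f i x)) '' (ς y).1)) := by
    intro i y
    refine ⟨_, ?_, (ς y).2.1.image _, rfl⟩
    refine ((hf i).2.2.image r).subset ?_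
    rintro _ ⟨x, _, rfl⟩
    exact ⟨f i x, ⟨x, rfl⟩, rfl⟩
  let φ : ULift.{u} ℕ → Y → FinCompacts Y := fun i y => ⟨_, hfc i.down y⟩
  have hself : ∀ i y, y ∈ (φ i y).1 := by
    intro i y
    obtain ⟨x, hx, hxy⟩ := (hsec' y y).1 le_rfl
    exact ⟨_, ⟨x, hx, rfl⟩, (hrm ((hf i.down).2.1 x)).trans hxy⟩
  have hdec : ∀ i j : ULift.{u} ℕ, i.down ≤ j.down → ∀ y, (φ j y).1 ⊆ (φ i y).1 := by
    rintro i j hij y z ⟨_, ⟨x, hx, rfl⟩, hz⟩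
    exact ⟨_, ⟨x, hx, rfl⟩, (hrm (hfmono _ _ hij x)).trans hz⟩
  -- continuity of `φ i` with respect to the upper Vietoris topology
  have hbox : ∀ i (U : Set Y), ScottOpen U → ScottOpen {y | (φ i y).1 ⊆ U} := by
    intro i U hU
    have h1 : ScottOpen (f i.down ⁻¹' (r ⁻¹' U)) :=
      scott_continuous_iff.1 (hf i.down).1 _ (scott_continuous_iff.1 hc _ hU)
    have hbase : IsOpen {Q : SmythP X | Q.1 ⊆ f i.down ⁻¹' (r ⁻¹' U)} :=
      isOpen_generateFrom_of_mem ⟨_, h1, rfl⟩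
    have h2 : IsOpen (ς ⁻¹' {Q | Q.1 ⊆ f i.down ⁻¹' (r ⁻¹' U)}) := hbase.preimage hς
    have h3 : {y | (φ i y).1 ⊆ U} = ς ⁻¹' {Q | Q.1 ⊆ f i.down ⁻¹' (r ⁻¹' U)} := by
      ext y
      constructor
      · intro h x hx
        exact h ⟨_, ⟨x, hx, rfl⟩, le_rfl⟩
      · rintro h z ⟨_, ⟨x, hx, rfl⟩, hz⟩
        exact hU.1 hz (h hx)
    rw [h3]
    exact h2
  have hmono : ∀ i, Monotone (φ i) := by
    intro i y y' hyy'
    exact subset_of_scottOpen_nhds (upClos_upper (φ i y).2) fun U hU hyU =>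
      (hbox i U hU).1 hyy' hyU
  have hran : ∀ i, (Set.range (φ i)).Finite := by
    intro i
    have hpow := ((hf i.down).2.2.image r).finite_subsets
    refine Set.Finite.of_finite_image (f := Subtype.val)
      ((hpow.image upClos).subset ?_) Subtype.val_injective.injOn
    rintro _ ⟨_, ⟨y, rfl⟩, rfl⟩
    refine ⟨_, ?_, rfl⟩
    rintro _ ⟨x, _, rfl⟩
    exact ⟨f i.down x, ⟨x, rfl⟩, rfl⟩
  refine ⟨hY, ⟨r bot, fun y => ?_⟩, ULift.{u} ℕ, inferInstance, φ, ⟨⟨0⟩⟩, ?_, ?_, ?_⟩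
  · obtain ⟨x, _, hxy⟩ := (hsec' y y).1 le_rfl
    exact (hrm (hbot x)).trans hxy
  · intro i j
    exact ⟨⟨max i.down j.down⟩, hdec _ _ (le_max_left _ _), hdec _ _ (le_max_right _ _)⟩
  · intro i
    refine ⟨scott_continuous_iff.2 fun V hV => ⟨fun a b hab ha => hV.1 (hmono i hab) ha, ?_⟩,
      hself i, hran i⟩
    intro d hd hdir a ha haV
    obtain ⟨y₀, hy₀, hmax⟩ := exists_max_of_finite_range (hmono i) (hran i) hd hdir
    -- by Vietoris continuity, the largest value on `d` is already the value at the supremum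
    have hle : φ i a ≤ φ i y₀ := subset_of_scottOpen_nhds (upClos_upper (φ i a).2) (by
      intro U hU haU
      obtain ⟨y, hy, hyU⟩ := (hbox i U hU).2 d hd hdir a ha haU
      exact Set.Subset.trans (hmax y hy) hyU)
    exact ⟨y₀, hy₀, hV.1 hle haV⟩
  · intro y
    apply Set.Subset.antisymm
    · intro z hz
      by_contra hyz
      have hVo : ScottOpen (r ⁻¹' {w | ¬ w ≤ z}) :=
        scott_continuous_iff.1 hc _ (scottOpen_not_le z)
      have hcov : (ς y).1 ⊆ ⋃ i, f i ⁻¹' (r ⁻¹' {w | ¬ w ≤ z}) := by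
        intro x hx
        have hxV : x ∈ r ⁻¹' {w | ¬ w ≤ z} := fun hxz => hyz ((hsec' y z).2 ⟨x, hx, hxz⟩)
        have hdir : DirectedOn (· ≤ ·) (Set.range fun i => f i x) := by
          rintro _ ⟨i, rfl⟩ _ ⟨j, rfl⟩
          exact ⟨_, ⟨max i j, rfl⟩, hfmono _ _ (le_max_left _ _) x,
            hfmono _ _ (le_max_right _ _) x⟩
        obtain ⟨_, ⟨i, rfl⟩, hi⟩ := hVo.2 _ (Set.range_nonempty _) hdir x
          (hfsup x) hxV
        exact Set.mem_iUnion.2 ⟨i, hi⟩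
      obtain ⟨i, hi⟩ := (ς y).2.2.1.elim_directed_cover _
        (fun i => scott_continuous_iff.1 (hf i).1 _ hVo) hcov (by
          refine directed_of_isDirected_le ?_
          intro i j hij x hx
          exact hVo.1 (hfmono i j hij x) hx)
      obtain ⟨_, ⟨x, hx, rfl⟩, hxz⟩ := Set.mem_iInter.1 hz ⟨i⟩
      exact hi hx hxz
    · intro z hz
      refine Set.mem_iInter.2 fun i => ?_
      exact upClos_upper (φ i y).2 hz (hself i y)

/-! ### A sequence of quasi-deflations -/

/-- The data extracted from an ωQRB-domain: a decreasing sequence of quasi-deflations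
(written here as set-valued maps), each with a finite set `A n` of possible minimal points. -/
structure QDSeq (Y : Type u) [PartialOrder Y] where
  /-- The quasi-deflations. -/
  φ : ℕ → Y → Set Y
  /-- Finite sets of generators. -/
  A : ℕ → Set Y
  finite_A : ∀ n, (A n).Finite
  exists_gen : ∀ n y, ∀ z ∈ φ n y, ∃ e ∈ A n, e ∈ φ n y ∧ e ≤ z
  upper : ∀ n y, IsUpperSet (φ n y)
  self_mem : ∀ n y, y ∈ φ n y
  anti : ∀ m n, m ≤ n → ∀ y, φ n y ⊆ φ m y
  mono : ∀ n y y', y ≤ y' → φ n y' ⊆ φ n y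
  lub : ∀ n (d : Set Y), d.Nonempty → DirectedOn (· ≤ ·) d → ∀ a, IsLUB d a →
    ∃ y ∈ d, φ n y = φ n a
  gen : ∀ y z, (∀ n, z ∈ φ n y) → y ≤ z

theorem exists_qdSeq {Y : Type u} [PartialOrder Y] (h : IsOmegaQRBDomain Y) :
    Nonempty (QDSeq Y) := by
  obtain ⟨_, _, I, hI, φ, hne, hdir, hq, hgen⟩ := h
  have := Encodable.ofCountable I
  have : Inhabited I := Classical.inhabited_of_nonempty hne
  have hdir' : Directed (fun f g : Y → FinCompacts Y => ∀ x, (g x).1 ⊆ (f x).1) φ := by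
    intro i j
    obtain ⟨k, h1, h2⟩ := hdir i j
    exact ⟨k, h1, h2⟩
  let s := hdir'.sequence φ
  have hs : ∀ n x, (φ (s (n + 1)) x).1 ⊆ (φ (s n) x).1 := fun n => hdir'.sequence_mono_nat n
  have hA : ∀ i, ∃ A : Set Y, A.Finite ∧
      ∀ y, ∀ z ∈ (φ i y).1, ∃ e ∈ A, e ∈ (φ i y).1 ∧ e ≤ z := by
    intro i
    choose E hE _ hE' using fun B : FinCompacts Y => B.2
    refine ⟨⋃ B ∈ Set.range (φ i), E B, (hq i).2.2.biUnion fun B _ => hE B, ?_⟩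
    intro y z hz
    rw [hE' (φ i y)] at hz
    obtain ⟨e, he, hez⟩ := hz
    refine ⟨e, Set.mem_biUnion ⟨y, rfl⟩ he, ?_, hez⟩
    rw [hE' (φ i y)]
    exact ⟨e, he, le_rfl⟩
  choose A hA1 hA2 using hA
  refine ⟨⟨fun n y => (φ (s n) y).1, fun n => A (s n), fun n => hA1 _, fun n => hA2 _,
    fun n y => upClos_upper (φ _ y).2, fun n y => (hq _).2.1 y, ?_,
    fun n y y' hyy' => scott_continuous_monotone (hq _).1 hyy', ?_, ?_⟩⟩
  · intro m n hmn y
    exact antitone_nat_of_succ_le (f := fun n => (φ (s n) y).1) (fun n => hs n y) hmn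
  · intro n d hd hdd a ha
    obtain ⟨y, hy, he⟩ := exists_eq_of_finite_range (hq (s n)).1 (hq (s n)).2.2 hd hdd ha
    exact ⟨y, hy, congrArg Subtype.val he⟩
  · intro y z hz
    have : z ∈ ⋂ i, (φ i y).1 :=
      Set.mem_iInter.2 fun i => hdir'.rel_sequence i y (hz (Encodable.encode i + 1))
    rw [hgen] at this
    exact this

/-- A form of Kőnig's lemma for finitely branching trees of sequences; the infinite branch is
the limit of longer and longer finite ones along a nonprincipal ultrafilter. -/
theorem konig {Y : Type u} {A : ℕ → Set Y} (hA : ∀ n, (A n).Finite)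
    (P : ℕ → (ℕ → Y) → Prop) (hanti : ∀ m n s, m ≤ n → P n s → P m s)
    (hloc : ∀ n s t, (∀ i < n, s i = t i) → P n s → P n t)
    (hex : ∀ n, ∃ s, (∀ i < n, s i ∈ A i) ∧ P n s) : ∃ s, ∀ n, P n s := by
  choose s hsA hsP using hex
  have hge : ∀ k, ∀ᶠ n in (Filter.hyperfilter ℕ : Filter ℕ), k ≤ n := fun k =>
    Nat.hyperfilter_le_atTop (Filter.eventually_ge_atTop k)
  have hlim : ∀ i, ∃ a, ∀ᶠ n in (Filter.hyperfilter ℕ : Filter ℕ), s n i = a := by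
    intro i
    have h : ∀ᶠ n in (Filter.hyperfilter ℕ : Filter ℕ), ∃ a ∈ A i, s n i = a :=
      (hge (i + 1)).mono fun n hn => ⟨_, hsA n i hn, rfl⟩
    obtain ⟨a, _, ha⟩ := (Ultrafilter.eventually_exists_mem_iff (hA i)).1 h
    exact ⟨a, ha⟩
  choose t ht using hlim
  refine ⟨t, fun k => ?_⟩
  have h1 : ∀ᶠ n in (Filter.hyperfilter ℕ : Filter ℕ), ∀ i ∈ Set.Iio k, s n i = t i :=
    (Filter.eventually_all_finite (Set.finite_Iio k)).2 fun i _ => ht i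
  obtain ⟨n, hn1, hn2⟩ := (h1.and (hge k)).exists
  exact hloc k _ _ hn1 (hanti k n _ hn2 (hsP n))

/-! ### The tree domain -/

namespace QDSeq

variable {Y : Type u} [PartialOrder Y] (D : QDSeq Y)

/-- The domain of finite and infinite words `w₀ ≤ w₁ ≤ ⋯` with `wₙ ∈ A n` and
`wₙ ∈ φ n (wₘ)` for `n ≤ m`, under the prefix order. A word is encoded by its graph, a subset of
`ℕ × Y`, so that the prefix order is inclusion; the second condition, taken at `n = m`, makes
the graph single-valued. -/
def Word : Type u :=
  {S : Set (ℕ × Y) //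
    (∀ n a, (n, a) ∈ S → a ∈ D.A n) ∧
    (∀ n m a b, n ≤ m → (n, a) ∈ S → (m, b) ∈ S → a ≤ b ∧ a ∈ D.φ n b) ∧
    (∀ n m b, n ≤ m → (m, b) ∈ S → ∃ a, (n, a) ∈ S)}

instance : PartialOrder D.Word := inferInstanceAs (PartialOrder (Subtype _))

variable {D}

theorem Word.le_def {v w : D.Word} : v ≤ w ↔ v.1 ⊆ w.1 := Iff.rfl

theorem Word.unique (w : D.Word) {n : ℕ} {a b : Y} (ha : (n, a) ∈ w.1) (hb : (n, b) ∈ w.1) :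
    a = b :=
  le_antisymm (w.2.2.1 n n a b le_rfl ha hb).1 (w.2.2.1 n n b a le_rfl hb ha).1

variable (D) in
/-- The empty word. -/
def emptyWord : D.Word := ⟨∅, by simp, by simp, by simp⟩

theorem emptyWord_le (w : D.Word) : D.emptyWord ≤ w := Set.empty_subset w.1

/-- The union of a directed set of words. -/
def dsup (d : Set D.Word) (hdir : DirectedOn (· ≤ ·) d) : D.Word :=
  ⟨⋃ w ∈ d, w.1, by
    refine ⟨?_, ?_, ?_⟩
    · intro n a h
      simp only [Set.mem_iUnion] at h
      obtain ⟨w, _, h⟩ := h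
      exact w.2.1 n a h
    · intro n m a b hnm ha hb
      simp only [Set.mem_iUnion] at ha hb
      obtain ⟨w, hw, ha⟩ := ha
      obtain ⟨w', hw', hb⟩ := hb
      obtain ⟨z, _, h1, h2⟩ := hdir w hw w' hw'
      exact z.2.2.1 n m a b hnm (h1 ha) (h2 hb)
    · intro n m b hnm hb
      simp only [Set.mem_iUnion] at hb
      obtain ⟨w, hw, hb⟩ := hb
      obtain ⟨a, ha⟩ := w.2.2.2 n m b hnm hb
      exact ⟨a, Set.mem_biUnion hw ha⟩⟩

theorem isLUB_dsup (d : Set D.Word) (hdir : DirectedOn (· ≤ ·) d) : IsLUB d (dsup d hdir) :=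
  ⟨fun _ hw => Set.subset_biUnion_of_mem (u := fun w : D.Word => w.1) hw,
    fun _ hz => Set.iUnion₂_subset fun _ hw => hz hw⟩

theorem mem_of_isLUB {d : Set D.Word} (hdir : DirectedOn (· ≤ ·) d) {w : D.Word}
    (hw : IsLUB d w) {p : ℕ × Y} (hp : p ∈ w.1) : ∃ v ∈ d, p ∈ v.1 := by
  rw [hw.unique (isLUB_dsup d hdir)] at hp
  simpa [dsup] using hp

theorem isDcpo_word : IsDcpo D.Word := fun d _ hdir => ⟨_, isLUB_dsup d hdir⟩

/-- The prefix of length (at most) `n`. -/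
def trunc (n : ℕ) (w : D.Word) : D.Word :=
  ⟨{p | p ∈ w.1 ∧ p.1 < n}, fun k a h => w.2.1 k a h.1,
    fun k m a b hkm ha hb => w.2.2.1 k m a b hkm ha.1 hb.1, by
      rintro k m b hkm ⟨hb, hm⟩
      obtain ⟨a, ha⟩ := w.2.2.2 k m b hkm hb
      exact ⟨a, ha, hkm.trans_lt hm⟩⟩

theorem trunc_le (n : ℕ) (w : D.Word) : trunc n w ≤ w := fun _ h => h.1

theorem trunc_mono (n : ℕ) {v w : D.Word} (h : v ≤ w) : trunc n v ≤ trunc n w :=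
  fun _ hp => ⟨h hp.1, hp.2⟩

theorem trunc_le_trunc {m n : ℕ} (h : m ≤ n) (w : D.Word) : trunc m w ≤ trunc n w :=
  fun _ hp => ⟨hp.1, hp.2.trans_le h⟩

theorem trunc_trunc (n : ℕ) (w : D.Word) : trunc n (trunc n w) = trunc n w :=
  Subtype.ext (Set.ext fun _ => ⟨fun h => h.1, fun h => ⟨h, h.2⟩⟩)

theorem finite_range_trunc (n : ℕ) : (Set.range (trunc n : D.Word → D.Word)).Finite := by
  have hfin : (⋃ i ∈ Set.Iio n, (fun a => (i, a)) '' D.A i).Finite :=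
    (Set.finite_Iio n).biUnion fun i _ => (D.finite_A i).image _
  refine Set.Finite.of_finite_image (f := Subtype.val) (hfin.finite_subsets.subset ?_)
    Subtype.val_injective.injOn
  rintro _ ⟨_, ⟨w, rfl⟩, rfl⟩ ⟨i, a⟩ ⟨hp, hi⟩
  exact Set.mem_biUnion (show i ∈ Set.Iio n from hi) ⟨a, w.2.1 i a hp, rfl⟩

theorem isLUB_trunc (w : D.Word) : IsLUB (Set.range fun n => trunc n w) w := by
  refine ⟨?_, fun z hz => ?_⟩
  · rintro _ ⟨n, rfl⟩
    exact trunc_le n w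
  · rintro ⟨n, a⟩ hp
    exact hz ⟨n + 1, rfl⟩ (show (n, a) ∈ (trunc (n + 1) w).1 from ⟨hp, Nat.lt_succ_self n⟩)

theorem directedOn_trunc (w : D.Word) : DirectedOn (· ≤ ·) (Set.range fun n => trunc n w) := by
  rintro _ ⟨i, rfl⟩ _ ⟨j, rfl⟩
  exact ⟨_, ⟨max i j, rfl⟩, trunc_le_trunc (le_max_left _ _) w,
    trunc_le_trunc (le_max_right _ _) w⟩

theorem exists_trunc_mem {U : Set D.Word} (hU : ScottOpen U) {w : D.Word} (hw : w ∈ U) :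
    ∃ n, trunc n w ∈ U := by
  obtain ⟨_, ⟨n, rfl⟩, hn⟩ :=
    hU.2 _ (Set.range_nonempty _) (directedOn_trunc w) w (isLUB_trunc w) hw
  exact ⟨n, hn⟩

theorem isOmegaBDomain_word : IsOmegaBDomain D.Word := by
  refine ⟨isDcpo_word, ⟨D.emptyWord, emptyWord_le⟩, trunc, fun n =>
    ⟨scott_continuous_iff.2 fun V hV => ⟨?_, ?_⟩, trunc_le n, finite_range_trunc n⟩, trunc_trunc, fun i j h => trunc_le_trunc h, isLUB_trunc⟩
  · exact fun v w h hv => hV.1 (trunc_mono n h) hv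
  · intro d hd hdir w hw hwV
    have hl : IsLUB (trunc n '' d) (trunc n w) := by
      refine ⟨?_, fun z hz => ?_⟩
      · rintro _ ⟨v, hv, rfl⟩
        exact trunc_mono n (hw.1 hv)
      · rintro p ⟨hp, hpn⟩
        obtain ⟨v, hv, hpv⟩ := mem_of_isLUB hdir hw hp
        exact hz ⟨v, hv, rfl⟩ (show p ∈ (trunc n v).1 from ⟨hpv, hpn⟩)
    have hd' : DirectedOn (· ≤ ·) (trunc n '' d) := by
      rintro _ ⟨v, hv, rfl⟩ _ ⟨v', hv', rfl⟩
      obtain ⟨z, hz, h1, h2⟩ := hdir v hv v' hv'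
      exact ⟨_, ⟨z, hz, rfl⟩, trunc_mono n h1, trunc_mono n h2⟩
    obtain ⟨_, ⟨v, hv, rfl⟩, hvV⟩ := hV.2 _ (hd.image _) hd' _ hl hwV
    exact ⟨v, hv, hvV⟩

/-! ### The evaluation map -/

/-- The letters of a word, together with a base point `b`. -/
def vals (b : Y) (w : D.Word) : Set Y := {y | y = b ∨ ∃ n, (n, y) ∈ w.1}

theorem directedOn_vals {b : Y} (hb : ∀ y, b ≤ y) (w : D.Word) :
    DirectedOn (· ≤ ·) (vals b w) := by
  rintro x (rfl | ⟨n, hx⟩) y (hy | ⟨m, hy⟩)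
  · exact ⟨y, Or.inl hy, hb y, le_rfl⟩
  · exact ⟨y, Or.inr ⟨m, hy⟩, hb y, le_rfl⟩
  · exact ⟨x, Or.inr ⟨n, hx⟩, le_rfl, hy ▸ hb x⟩
  · rcases le_total n m with h | h
    · exact ⟨y, Or.inr ⟨m, hy⟩, (w.2.2.1 _ _ _ _ h hx hy).1, le_rfl⟩
    · exact ⟨x, Or.inr ⟨n, hx⟩, le_rfl, (w.2.2.1 _ _ _ _ h hy hx).1⟩

variable {b : Y} {r : D.Word → Y}

theorem eval_mono (hr : ∀ w, IsLUB (vals b w) (r w)) : Monotone r := by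
  intro v w h
  refine (hr v).mono (hr w) ?_
  rintro y (rfl | ⟨n, hy⟩)
  · exact Or.inl rfl
  · exact Or.inr ⟨n, h hy⟩

theorem eval_continuous (hb : ∀ y, b ≤ y) (hr : ∀ w, IsLUB (vals b w) (r w)) :
    @Continuous D.Word Y (scottTop D.Word) (scottTop Y) r := by
  refine scott_continuous_iff.2 fun V hV => ⟨?_, ?_⟩
  · exact fun v w h hv => hV.1 (eval_mono hr h) hv
  · intro d hd hdir w hw hwV
    obtain ⟨y, hy, hyV⟩ := hV.2 _ ⟨b, Or.inl rfl⟩ (directedOn_vals hb w) _ (hr w) hwV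
    rcases hy with rfl | ⟨n, hy⟩
    · obtain ⟨v, hv⟩ := hd
      exact ⟨v, hv, hV.1 (hb _) hyV⟩
    · obtain ⟨v, hv, hyv⟩ := mem_of_isLUB hdir hw hy
      exact ⟨v, hv, hV.1 ((hr v).1 (Or.inr ⟨n, hyv⟩)) hyV⟩

/-- The condition `wₙ ∈ φ n (wₘ)` on words passes to the supremum. -/
theorem mem_phi_eval (hb : ∀ y, b ≤ y) (hr : ∀ w, IsLUB (vals b w) (r w)) (w : D.Word)
    {n : ℕ} {a : Y} (ha : (n, a) ∈ w.1) : a ∈ D.φ n (r w) := by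
  obtain ⟨y, hy, he⟩ := D.lub n _ ⟨b, Or.inl rfl⟩ (directedOn_vals hb w) _ (hr w)
  rw [← he]
  rcases hy with rfl | ⟨m, hy⟩
  · exact D.mono n _ _ (hb a) (D.self_mem n a)
  · rcases le_total n m with h | h
    · exact (w.2.2.1 _ _ _ _ h ha hy).2
    · exact D.mono n _ _ (w.2.2.1 _ _ _ _ h hy ha).1 (D.self_mem n a)

/-- An infinite word. -/
def ofSeq (s : ℕ → Y) (h1 : ∀ n, s n ∈ D.A n)
    (h2 : ∀ n m, n ≤ m → s n ≤ s m ∧ s n ∈ D.φ n (s m)) : D.Word :=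
  ⟨{p | p.2 = s p.1}, by
    intro n a (ha : a = s n)
    exact ha ▸ h1 n, by
    intro n m a b hnm (ha : a = s n) (hb : b = s m)
    exact ha ▸ hb ▸ h2 n m hnm, fun n _ _ _ _ => ⟨s n, rfl⟩⟩

theorem le_eval_ofSeq (hr : ∀ w, IsLUB (vals b w) (r w)) {s : ℕ → Y} (h1 : ∀ n, s n ∈ D.A n)
    (h2 : ∀ n m, n ≤ m → s n ≤ s m ∧ s n ∈ D.φ n (s m)) {y : Y} (hs : ∀ n, s n ∈ D.φ n y) :
    y ≤ r (ofSeq s h1 h2) :=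
  D.gen _ _ fun n => D.upper n y ((hr (ofSeq s h1 h2)).1 (Or.inr ⟨n, show s n = s n from rfl⟩)) (hs n)

/-- Finite approximations of the branch required for surjectivity, built from the last letter
backwards using `φ (n + 1) y ⊆ φ n y`. -/
theorem exists_chain (y : Y) (n : ℕ) : ∀ z, (∀ i < n, z ∈ D.φ i y) → ∃ s : ℕ → Y,
    (∀ i < n, s i ∈ D.A i ∧ s i ∈ D.φ i y ∧ s i ≤ z) ∧ ∀ j < n, ∀ i ≤ j, s i ≤ s j := by
  induction n with
  | zero => exact fun z _ => ⟨fun _ => z, by simp, by simp⟩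
  | succ n ih =>
    intro z hz
    obtain ⟨e, heA, hey, hez⟩ := D.exists_gen n y z (hz n n.lt_succ_self)
    obtain ⟨s, hs1, hs2⟩ := ih e fun i hi => D.anti i n hi.le y hey
    refine ⟨fun i => if i = n then e else s i, ?_, ?_⟩
    · intro i hi
      by_cases h : i = n
      · subst h
        simpa using ⟨heA, hey, hez⟩
      · obtain ⟨h1, h2, h3⟩ := hs1 i (by omega)
        simpa [h] using ⟨h1, h2, h3.trans hez⟩
    · intro j hj i hij
      by_cases h : j = n
      · by_cases h' : i = n
        · simp [h, h']
        · simpa [h, h'] using (hs1 i (by omega)).2.2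
      · have h' : i ≠ n := by omega
        simpa [h, h'] using hs2 j (by omega) i hij

theorem eval_surjective (hb : ∀ y, b ≤ y) (hr : ∀ w, IsLUB (vals b w) (r w)) :
    Function.Surjective r := by
  intro y
  obtain ⟨s, hs⟩ := konig D.finite_A
    (fun n s => (∀ i < n, s i ∈ D.A i ∧ s i ∈ D.φ i y ∧ s i ≤ y) ∧ ∀ j < n, ∀ i ≤ j, s i ≤ s j)
    (fun m n s hmn h => ⟨fun i hi => h.1 i (hi.trans_le hmn), fun j hj => h.2 j (hj.trans_le hmn)⟩)
    (fun n s t hst h => ⟨fun i hi => hst i hi ▸ h.1 i hi, fun j hj i hij =>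
      hst j hj ▸ hst i (hij.trans_lt hj) ▸ h.2 j hj i hij⟩)
    (fun n => by
      obtain ⟨s, h1, h2⟩ := exists_chain (D := D) y n y fun i _ => D.self_mem i y
      exact ⟨s, fun i hi => (h1 i hi).1, h1, h2⟩)
  have h1 := fun n => (hs (n + 1)).1 n n.lt_succ_self
  refine ⟨ofSeq s (fun n => (h1 n).1) fun n m hnm =>
    ⟨(hs (m + 1)).2 m m.lt_succ_self n hnm, D.mono n _ _ (h1 m).2.2 (h1 n).2.1⟩, ?_⟩
  refine le_antisymm ((hr _).2 ?_) (le_eval_ofSeq hr _ _ fun n => (h1 n).2.1)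
  rintro a (rfl | ⟨n, ha⟩)
  · exact hb y
  · exact (show a = s n from ha) ▸ (h1 n).2.2

/-- The compactness property behind properness: if an open `U` contains the fibre `r⁻¹(↑y)`, then
it contains every word, finite or not, with sufficiently many letters `wᵢ ∈ φ i y`. Otherwise
Kőnig's lemma yields an infinite word in the fibre none of whose prefixes lies in `U`. -/
theorem exists_length (hr : ∀ w, IsLUB (vals b w) (r w)) {U : Set D.Word}
    (hU : ScottOpen U) {y : Y} (hyU : ∀ w, y ≤ r w → w ∈ U) :
    ∃ n, ∀ w : D.Word, (∀ i < n, ∃ a, (i, a) ∈ w.1 ∧ a ∈ D.φ i y) → w ∈ U := by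
  by_contra! hcon
  obtain ⟨s, hs⟩ := konig D.finite_A
    (fun n s => ∃ w : D.Word, w ∉ U ∧ ∀ i < n, (i, s i) ∈ w.1 ∧ s i ∈ D.φ i y)
    (fun m n s hmn ⟨w, hw, h⟩ => ⟨w, hw, fun i hi => h i (hi.trans_le hmn)⟩)
    (fun n s t hst ⟨w, hw, h⟩ => ⟨w, hw, fun i hi => hst i hi ▸ h i hi⟩)
    (fun n => by
      obtain ⟨w, hw, hwU⟩ := hcon n
      have : ∀ i, ∃ a, i < n → (i, a) ∈ w.1 ∧ a ∈ D.φ i y := by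
        intro i
        by_cases hi : i < n
        · obtain ⟨a, ha⟩ := hw i hi
          exact ⟨a, fun _ => ha⟩
        · exact ⟨y, fun h => absurd h hi⟩
      choose s hs using this
      exact ⟨s, fun i hi => w.2.1 i _ (hs i hi).1, w, hwU, hs⟩)
  have h1 : ∀ n, s n ∈ D.A n := fun n => by
    obtain ⟨w, _, h⟩ := hs (n + 1)
    exact w.2.1 n _ (h n n.lt_succ_self).1
  have h2 : ∀ n m, n ≤ m → s n ≤ s m ∧ s n ∈ D.φ n (s m) := fun n m hnm => by
    obtain ⟨w, _, h⟩ := hs (m + 1)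
    exact w.2.2.1 n m _ _ hnm (h n (by omega)).1 (h m (by omega)).1
  have h3 : ∀ n, s n ∈ D.φ n y := fun n => by
    obtain ⟨w, _, h⟩ := hs (n + 1)
    exact (h n n.lt_succ_self).2
  obtain ⟨n, hn⟩ := exists_trunc_mem hU (hyU _ (le_eval_ofSeq hr h1 h2 h3))
  obtain ⟨w, hw, h⟩ := hs n
  refine hw (hU.1 ?_ hn)
  rintro ⟨i, a⟩ ⟨hia, hi⟩
  obtain rfl : a = s i := hia
  exact (h i hi).1

theorem trunc_eq_self {w : D.Word} {n i : ℕ} (hi : i < n) (h : ∀ a, (i, a) ∉ w.1) :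
    trunc n w = w := by
  refine le_antisymm (trunc_le n w) ?_
  rintro ⟨m, c⟩ hm
  refine ⟨hm, ?_⟩
  by_contra hnm
  obtain ⟨a, ha⟩ := w.2.2.2 i m c (by simp only at hnm; omega) hm
  exact h a ha

theorem isCompact_fibre (hb : ∀ y, b ≤ y) (hr : ∀ w, IsLUB (vals b w) (r w)) (y : Y) :
    @IsCompact D.Word (scottTop D.Word) (r ⁻¹' Set.Ici y) := by
  let := scottTop D.Word
  refine isCompact_of_finite_subcover fun {ι} V hV hcov => ?_
  have hU : IsOpen (⋃ i, V i) := isOpen_iUnion hV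
  obtain ⟨n, hn⟩ := exists_length hr hU (y := y) fun w hw => hcov hw
  have key : ∀ w, y ≤ r w → trunc n w ∈ ⋃ i, V i := by
    intro w hw
    by_cases h : ∀ i < n, ∃ a, (i, a) ∈ w.1
    · refine hn _ fun i hi => ?_
      obtain ⟨a, ha⟩ := h i hi
      exact ⟨a, ⟨ha, hi⟩, D.mono i _ _ hw (mem_phi_eval hb hr w ha)⟩
    · push Not at h
      obtain ⟨i, hi, h⟩ := h
      rw [trunc_eq_self hi h]
      exact hcov hw
  -- the fibre lies in the upward closure of finitely many prefixes, all of them covered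
  have hfin : (trunc n '' (r ⁻¹' Set.Ici y)).Finite :=
    (finite_range_trunc n).subset (Set.image_subset_range _ _)
  have hcov' : trunc n '' (r ⁻¹' Set.Ici y) ⊆ ⋃ i, V i := by
    rintro _ ⟨w, hw, rfl⟩
    exact key w hw
  obtain ⟨t, ht⟩ := hfin.isCompact.elim_finite_subcover V hV hcov'
  refine ⟨t, fun w hw => ?_⟩
  obtain ⟨i, hi, h⟩ := Set.mem_iUnion₂.1 (ht ⟨w, hw, rfl⟩)
  exact Set.mem_biUnion hi ((show ScottOpen (V i) from hV i).1 (trunc_le n w) h)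

/-- The complement of `↓r(Uᶜ)` is open. Along a directed set with supremum `y`, words with at
least `n` letters are controlled by `exists_length`, and the finitely many shorter ones are
treated one by one. -/
theorem scottOpen_fibre (hb : ∀ y, b ≤ y) (hr : ∀ w, IsLUB (vals b w) (r w)) {U : Set D.Word}
    (hU : ScottOpen U) : ScottOpen {y | ∀ w, y ≤ r w → w ∈ U} := by
  refine ⟨fun y y' hyy' h w hw => h w (hyy'.trans hw), ?_⟩
  intro d hd hdir y hy hyU
  obtain ⟨n, hn⟩ := exists_length hr hU hyU
  have : Nonempty d := hd.to_subtype
  have hdir' : Directed (· ≤ ·) (Subtype.val : d → Y) := directedOn_iff_directed.1 hdir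
  obtain ⟨c, hc⟩ : ∃ c : d, ∀ i ∈ Set.Iio n, D.φ i c.1 ⊆ D.φ i y := by
    choose e he hey using fun i => D.lub i d hd hdir y hy
    obtain ⟨c, hc⟩ := hdir'.finite_set_le (f := Subtype.val)
      ((Set.finite_Iio n).image fun i => (⟨e i, he i⟩ : d))
    exact ⟨c, fun i hi => hey i ▸ D.mono i _ _ (hc _ ⟨i, hi, rfl⟩)⟩
  obtain ⟨c', hc'⟩ : ∃ c' : d, ∀ w ∈ Set.range (trunc n : D.Word → D.Word),
      c'.1 ≤ r w → y ≤ r w := by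
    have : ∀ w : D.Word, ∃ e : d, e.1 ≤ r w → y ≤ r w := by
      intro w
      by_contra! hcon
      exact (hcon ⟨hd.some, hd.some_mem⟩).2 (hy.2 fun e he => (hcon ⟨e, he⟩).1)
    choose e he using this
    obtain ⟨c', hc'⟩ := hdir'.finite_set_le (f := Subtype.val)
      ((finite_range_trunc (D := D) n).image e)
    exact ⟨c', fun w hw h => he w ((hc' _ ⟨w, hw, rfl⟩).trans h)⟩
  obtain ⟨z, hz, h1, h2⟩ := hdir c.1 c.2 c'.1 c'.2
  refine ⟨z, hz, fun w hzw => ?_⟩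
  by_cases h : ∀ i < n, ∃ a, (i, a) ∈ w.1
  · refine hn w fun i hi => ?_
    obtain ⟨a, ha⟩ := h i hi
    exact ⟨a, ha, hc i hi (D.mono i _ _ (h1.trans hzw) (mem_phi_eval hb hr w ha))⟩
  · push Not at h
    obtain ⟨i, hi, h⟩ := h
    exact hyU w (hc' w ⟨w, trunc_eq_self hi h⟩ (h2.trans hzw))

theorem eval_proper (hb : ∀ y, b ≤ y) (hr : ∀ w, IsLUB (vals b w) (r w)) :
    @PaperProper D.Word Y (scottTop D.Word) (scottTop Y) r := by
  let := scottTop D.Word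
  let := scottTop Y
  refine ⟨eval_continuous hb hr, fun F hF => ?_, fun y => ?_⟩
  · rw [← isOpen_compl_iff]
    have h := scottOpen_fibre hb hr (show ScottOpen Fᶜ from hF.isOpen_compl)
    have he : (specDownSet (r '' F))ᶜ = {y | ∀ w, y ≤ r w → w ∈ Fᶜ} := by
      ext y
      constructor
      · intro hy w hw hwF
        exact hy ⟨_, ⟨w, hwF, rfl⟩, specLE_scott.2 hw⟩
      · rintro hy ⟨_, ⟨w, hwF, rfl⟩, hw⟩
        exact hy w (specLE_scott.1 hw) hwF
    rw [he]
    exact h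
  · rw [specUp_scott]
    exact isCompact_fibre hb hr y

end QDSeq

theorem properImage_of_omegaQRB {Y : Type u} [PartialOrder Y] (h : IsOmegaQRBDomain Y) :
    ∃ (X : Type u) (instX : PartialOrder X),
      let := instX
      IsOmegaBDomain X ∧
        ∃ r : X → Y, @PaperProper X Y (scottTop X) (scottTop Y) r ∧
          Function.Surjective r := by
  obtain ⟨D⟩ := exists_qdSeq h
  obtain ⟨hY, ⟨b, hb⟩, _⟩ := h
  choose r hr using fun w : D.Word =>
    hY (QDSeq.vals b w) ⟨b, Or.inl rfl⟩ (QDSeq.directedOn_vals hb w)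
  exact ⟨D.Word, inferInstance, QDSeq.isOmegaBDomain_word, r, QDSeq.eval_proper hb hr,
    QDSeq.eval_surjective hb hr⟩

end Proof

/-- For a dcpo `Y`, the following are equivalent: (i) `Y` is an ωQRB-domain;
(ii) `Y` is a quasi-retract of an ωB-domain; (iii) `Y` is the image of an ωB-domain
under a proper map. -/
theorem omegaQRB_iff_quasiRetract_iff_properImage {Y : Type u} [PartialOrder Y]
    (hY : IsDcpo Y) :
    (IsOmegaQRBDomain Y ↔
      ∃ (X : Type u) (instX : PartialOrder X),
        letI := instX
        IsOmegaBDomain X ∧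
          ∃ r : X → Y, @IsQuasiRetraction X Y (scottTop X) (scottTop Y) r) ∧
    (IsOmegaQRBDomain Y ↔
      ∃ (X : Type u) (instX : PartialOrder X),
        letI := instX
        IsOmegaBDomain X ∧
          ∃ r : X → Y, @PaperProper X Y (scottTop X) (scottTop Y) r ∧
            Function.Surjective r) := by
  have h21 : (∃ (X : Type u) (instX : PartialOrder X),
      letI := instX
      IsOmegaBDomain X ∧
        ∃ r : X → Y, @IsQuasiRetraction X Y (scottTop X) (scottTop Y) r) →
      IsOmegaQRBDomain Y := by
    rintro ⟨X, _, hX, r, hr⟩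
    exact omegaQRB_of_quasiRetract hY hX hr
  refine ⟨⟨fun h => ?_, h21⟩, properImage_of_omegaQRB, ?_⟩
  · obtain ⟨X, i, hX, r, hr, hs⟩ := properImage_of_omegaQRB h
    exact ⟨X, i, hX, r, @quasiRetraction_of_proper _ _ (scottTop X) (scottTop Y) r hr hs⟩
  · rintro ⟨X, i, hX, r, hr, hs⟩
    exact h21 ⟨X, i, hX, r, @quasiRetraction_of_proper _ _ (scottTop X) (scottTop Y) r hr hs⟩
end

section
/- For every finite pointed poset Y, the dcpo V_1(Y) of continuous probability valuations on Y (ordered pointwise) is a continuous dcpo and an ωQRB-domain. -/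
/-!
Every directed set `d` with least upper bound `a` in `V_1(Y)` converges to `a` pointwise on the
finitely many opens of `Y` (`tendsto_of_isLUB`), so statements about a single open can be made
uniform over all of them. Two facts carry the proof.

* Continuity. Moving mass to the least element `b`, i.e. replacing `ν` by
  `t • ν + (1 - t) • δ_b`, does not change the value of `Y`, the only open containing `b`,
  and multiplies the others by `t`. For `t < 1` the result is way below `ν`, since a positive value
  strictly decreases, and these valuations increase to `ν` as `t → 1`.

* Uniform approximation. The set of probability valuations is compact in the product topology, so
  for every `ε > 0` there is a finite set `M` of valuations such that each `ν` has some `m ∈ M` with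
  `m ≤ ν ≤ m + ε` (`exists_finite_net`). With `M` attached to `ε`, the map
  `φ(ν) = ↑{m ∈ M | ν ≤ m + 2 ε}` is a quasi-deflation: `{ν | ν ≤ m + 2 ε}` is Scott-closed for each
  of the finitely many `m`. If `μ ∈ φ(ν)` for all `ε` then `ν ≤ μ + 2 ε` for all `ε`, so `ν ≤ μ`.
  The slack between `ε` and `2 ε` yields directedness: the map attached to `ε'` refines the one
  attached to `ε` as soon as `2 ε' ≤ ε`.
-/

open Set TopologicalSpace

universe u v

open Filter Topology NNReal

section FiniteOpens

variable {Y : Type u} [TopologicalSpace Y] [Finite (Opens Y)]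

/-! ### Directed suprema of probability valuations -/

/-- Scott continuity of a valuation is automatic when there are finitely many opens. -/
lemma IsProbValuation.of_finite {ν : Opens Y → ℝ≥0} (h0 : ν ⊥ = 0)
    (hm : ∀ U V : Opens Y, U ≤ V → ν U ≤ ν V)
    (hmod : ∀ U V : Opens Y, ν (U ⊔ V) + ν (U ⊓ V) = ν U + ν V) (h1 : ν ⊤ = 1) :
    IsProbValuation ν where
  empty := h0
  mono := hm
  modular := hmod
  total := h1
  scont := by
    intro S hne hdir
    obtain ⟨u, hu⟩ := (Set.toFinite S).exists_maximal hne
    have hgr : IsGreatest S u := by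
      refine ⟨hu.prop, fun v hv => ?_⟩
      obtain ⟨w, hw, huw, hvw⟩ := hdir u hu.prop v hv
      exact hvw.trans (hu.le_of_ge hw huw)
    rw [hgr.isLUB.sSup_eq]
    have hle : ∀ U : Opens Y, (⨆ (_ : U ∈ S), ν U) ≤ ν u := fun U =>
      ciSup_le' fun hU => hm _ _ (hgr.2 hU)
    refine le_antisymm ?_ (ciSup_le' hle)
    have h2 : ν u = ⨆ (_ : u ∈ S), ν u := by
      have : Nonempty (u ∈ S) := ⟨hgr.1⟩
      exact ciSup_const.symm
    rw [h2]
    exact le_ciSup (f := fun U : Opens Y => ⨆ (_ : U ∈ S), ν U)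
      ⟨ν u, by rintro _ ⟨U, rfl⟩; exact hle U⟩ u

omit [Finite (Opens Y)] in
lemma ProbVal.le_one (ν : ProbVal Y) (U : Opens Y) : ν.1 U ≤ 1 := by
  rw [← ν.2.total]
  exact ν.2.mono _ _ le_top

/-- A directed set of probability valuations has a least upper bound, which is its pointwise
limit. -/
lemma exists_isLUB_tendsto {d : Set (ProbVal Y)} (hne : d.Nonempty)
    (hd : DirectedOn (· ≤ ·) d) :
    ∃ s : ProbVal Y, IsLUB d s ∧ Tendsto (fun z : d => z.1.1) atTop (𝓝 s.1) := by
  have : Nonempty d := hne.to_subtype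
  have : IsDirectedOrder d := hd.isDirectedOrder
  have hbdd : ∀ U : Opens Y, BddAbove (Set.range fun z : d => z.1.1 U) := fun U =>
    ⟨1, by rintro _ ⟨z, rfl⟩; exact z.1.le_one U⟩
  let f : Opens Y → ℝ≥0 := fun U => ⨆ z : d, z.1.1 U
  have ht : ∀ U, Tendsto (fun z : d => z.1.1 U) atTop (𝓝 (f U)) := fun U =>
    tendsto_atTop_ciSup (fun z w hzw => hzw U) (hbdd U)
  have hf : IsProbValuation f := by
    refine IsProbValuation.of_finite ?_ ?_ ?_ ?_
    · simp [f, fun z : d => z.1.2.empty]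
    · intro U V hUV
      exact ciSup_mono (hbdd V) fun z => z.1.2.mono _ _ hUV
    · intro U V
      refine tendsto_nhds_unique ((ht (U ⊔ V)).add (ht (U ⊓ V))) ?_
      simp only [fun z : d => z.1.2.modular U V]
      exact (ht U).add (ht V)
    · simp [f, fun z : d => z.1.2.total]
  refine ⟨⟨f, hf⟩, ⟨fun z hz U => ?_, fun a ha U => ?_⟩, tendsto_pi_nhds.2 ht⟩
  · exact le_ciSup (hbdd U) ⟨z, hz⟩
  · exact ciSup_le fun z => ha z.2 U

lemma isDcpo_probVal : IsDcpo (ProbVal Y) := fun _ hne hd =>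
  (exists_isLUB_tendsto hne hd).imp fun _ h => h.1

lemma tendsto_of_isLUB {d : Set (ProbVal Y)} (hne : d.Nonempty)
    (hd : DirectedOn (· ≤ ·) d) {a : ProbVal Y} (ha : IsLUB d a) :
    Tendsto (fun z : d => z.1.1) atTop (𝓝 a.1) := by
  obtain ⟨s, hs, ht⟩ := exists_isLUB_tendsto hne hd
  rwa [ha.unique hs]

omit [Finite (Opens Y)] in
lemma exists_mem_of_eventually {d : Set (ProbVal Y)} (hne : d.Nonempty)
    (hd : DirectedOn (· ≤ ·) d) {p : ProbVal Y → Prop}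
    (h : ∀ᶠ z : d in atTop, p z.1) : ∃ z ∈ d, p z := by
  have : Nonempty d := hne.to_subtype
  have : IsDirectedOrder d := hd.isDirectedOrder
  obtain ⟨z, hz⟩ := h.exists
  exact ⟨z.1, z.2, hz⟩

/-! ### Mixtures with the Dirac valuation at the least element, and continuity -/

open Classical in
/-- The mixture `t • ν + (1 - t) • δ_b`, where `b` is a point whose only open neighbourhood is the
whole space: that neighbourhood keeps mass `1`, and the other values are scaled by `t`. -/
noncomputable def mixBot (b : Y) (hb : ∀ U : Opens Y, b ∈ U → U = ⊤) (t : ℝ≥0) (ht : t ≤ 1)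
    (ν : ProbVal Y) : ProbVal Y :=
  ⟨fun U => if b ∈ U then 1 else t * ν.1 U, by
    have hle : ∀ U, t * ν.1 U ≤ 1 := fun U => mul_le_one' ht (ν.le_one U)
    refine IsProbValuation.of_finite ?_ ?_ ?_ ?_
    · have : b ∉ (⊥ : Opens Y) := fun h => h
      simp [this, ν.2.empty]
    · intro U V hUV
      by_cases hU : b ∈ U
      · have hV : b ∈ V := hUV hU
        simp [hU, hV]
      · by_cases hV : b ∈ V
        · simpa [hU, hV] using hle U
        · simpa [hU, hV] using mul_le_mul_right (ν.2.mono _ _ hUV) t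
    · intro U V
      by_cases hU : b ∈ U
      · rw [hb U hU]; simp
      · by_cases hV : b ∈ V
        · rw [hb V hV]; simp [add_comm]
        · have h1 : b ∉ U ⊔ V := by
            intro h
            rcases h with h | h
            exacts [hU h, hV h]
          have h2 : b ∉ U ⊓ V := fun h => hU h.1
          simp only [hU, hV, h1, h2, if_false, ← mul_add, ν.2.modular]
    · have : b ∈ (⊤ : Opens Y) := trivial
      simp [this]⟩

variable {b : Y} (hb : ∀ U : Opens Y, b ∈ U → U = ⊤)

omit [Finite (Opens Y)] in
include hb in
lemma ProbVal.eq_one_of_mem (ν : ProbVal Y) {U : Opens Y} (h : b ∈ U) : ν.1 U = 1 := by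
  rw [hb U h, ν.2.total]

lemma mul_le_mixBot {t : ℝ≥0} (ht : t ≤ 1) (ν : ProbVal Y) (U : Opens Y) :
    t * ν.1 U ≤ (mixBot b hb t ht ν).1 U := by
  by_cases h : b ∈ U
  · simpa [mixBot, h] using mul_le_one' ht (ν.le_one U)
  · simp [mixBot, h]

/-- For `t < 1` the mixture lies below all valuations close to `ν` in the product topology: its
values `t * ν U` are strictly smaller than `ν U` unless `ν U = 0`, and `b ∈ U` forces `U = ⊤`. -/
lemma eventually_mixBot_le {t : ℝ≥0} (ht : t < 1) (ν : ProbVal Y) :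
    ∀ᶠ f : Opens Y → ℝ≥0 in 𝓝 ν.1, IsProbValuation f → (mixBot b hb t ht.le ν).1 ≤ f := by
  have key : ∀ U : Opens Y, ∀ᶠ f : Opens Y → ℝ≥0 in 𝓝 ν.1, t * ν.1 U ≤ f U := by
    intro U
    rcases eq_or_ne (ν.1 U) 0 with h0 | h0
    · simp [h0]
    · have hlt : t * ν.1 U < ν.1 U := by
        have := mul_lt_mul_of_pos_right ht (pos_iff_ne_zero.2 h0)
        rwa [one_mul] at this
      exact ((continuous_apply U).tendsto ν.1 |>.eventually (lt_mem_nhds hlt)).mono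
        fun f hf => hf.le
  filter_upwards [eventually_all.2 key] with f hf hfp U
  by_cases h : b ∈ U
  · rw [ProbVal.eq_one_of_mem hb _ h]
    exact (ProbVal.eq_one_of_mem hb ⟨f, hfp⟩ h).ge
  · simpa [mixBot, h] using hf U

lemma mixBot_wayBelow {t : ℝ≥0} (ht : t < 1) (ν : ProbVal Y) :
    approxes (Set.Ici (mixBot b hb t ht.le ν)) ν := by
  intro d hne hd a ha hνa
  have hev : ∀ᶠ z : d in atTop, mixBot b hb t ht.le a ≤ z.1 :=
    ((tendsto_of_isLUB hne hd ha).eventually (eventually_mixBot_le hb ht a)).mono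
      fun z hz => hz z.1.2
  obtain ⟨z, hz, hle⟩ := exists_mem_of_eventually hne hd hev
  refine ⟨z, hz, le_trans (fun U => ?_) hle⟩
  by_cases h : b ∈ U
  · simp [mixBot, h]
  · simpa [mixBot, h] using mul_le_mul_right (hνa U) t

lemma mixBot_mono {s t : ℝ≥0} (hst : s ≤ t) (ht : t ≤ 1) (ν : ProbVal Y) :
    mixBot b hb s (hst.trans ht) ν ≤ mixBot b hb t ht ν := by
  intro U
  by_cases h : b ∈ U
  · simp [mixBot, h]
  · simpa [mixBot, h] using mul_le_mul_left hst (ν.1 U)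

lemma le_of_mixBot_le {ν a : ProbVal Y}
    (h : ∀ (t : ℝ≥0) (ht : t < 1), mixBot b hb t ht.le ν ≤ a) : ν ≤ a := by
  intro U
  refine le_of_forall_lt_one_mul_le fun t ht => ?_
  exact (mul_le_mixBot hb ht.le ν U).trans (h t ht U)

lemma mixBot_le {t : ℝ≥0} (ht : t ≤ 1) (ν : ProbVal Y) : mixBot b hb t ht ν ≤ ν := by
  intro U
  by_cases h : b ∈ U
  · rw [ProbVal.eq_one_of_mem hb _ h, ProbVal.eq_one_of_mem hb _ h]
  · simpa [mixBot, h] using mul_le_of_le_one_left (zero_le (a := ν.1 U)) ht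

include hb in
lemma isContinuousDcpo_probVal : IsContinuousDcpo (ProbVal Y) := by
  refine ⟨isDcpo_probVal, fun ν => ?_⟩
  -- The mixtures form a directed set with supremum `ν`, hence are cofinal among the way-below ones.
  have hcof : ∀ y, approxes (Set.Ici y) ν →
      ∃ (t : ℝ≥0) (ht : t < 1), y ≤ mixBot b hb t ht.le ν := by
    intro y hy
    obtain ⟨z, ⟨t, rfl⟩, hz⟩ := hy (Set.range fun t : Set.Iio (1 : ℝ≥0) =>
        mixBot b hb t.1 (le_of_lt t.2) ν) ⟨_, ⟨0, Set.mem_Iio.2 zero_lt_one⟩, rfl⟩ (by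
        rintro _ ⟨s, rfl⟩ _ ⟨t, rfl⟩
        exact ⟨_, ⟨⟨max s.1 t.1, Set.mem_Iio.2 (max_lt s.2 t.2)⟩, rfl⟩,
          mixBot_mono hb (le_max_left _ _) _ ν, mixBot_mono hb (le_max_right _ _) _ ν⟩) ν
      ⟨by rintro _ ⟨t, rfl⟩; exact mixBot_le hb _ ν,
        fun a ha => le_of_mixBot_le hb fun t ht => ha ⟨⟨t, ht⟩, rfl⟩⟩ le_rfl
    exact ⟨t.1, t.2, hz⟩
  refine ⟨⟨_, mixBot_wayBelow hb zero_lt_one ν⟩, ?_, ?_, ?_⟩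
  · intro y hy z hz
    obtain ⟨s, hs, hys⟩ := hcof y hy
    obtain ⟨t, ht, hzt⟩ := hcof z hz
    exact ⟨_, mixBot_wayBelow hb (max_lt hs ht) ν,
      hys.trans (mixBot_mono hb (le_max_left _ _) _ ν),
      hzt.trans (mixBot_mono hb (le_max_right _ _) _ ν)⟩
  · intro y hy
    obtain ⟨t, ht, hyt⟩ := hcof y hy
    exact hyt.trans (mixBot_le hb _ ν)
  · intro a ha
    exact le_of_mixBot_le hb fun t ht => ha (mixBot_wayBelow hb ht ν)

/-! ### Compactness and finite nets -/

omit [Finite (Opens Y)] in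
lemma isClosed_modular :
    IsClosed {f : Opens Y → ℝ≥0 | f ⊥ = 0 ∧ (∀ U V : Opens Y, U ≤ V → f U ≤ f V) ∧
      (∀ U V : Opens Y, f (U ⊔ V) + f (U ⊓ V) = f U + f V) ∧ f ⊤ = 1} := by
  simp only [Set.ofPred_and, Set.ofPred_forall]
  refine (isClosed_eq (by fun_prop) (by fun_prop)).inter (IsClosed.inter ?_ (IsClosed.inter ?_ ?_))
  · exact isClosed_iInter fun U => isClosed_iInter fun V => isClosed_iInter fun _ =>
      isClosed_le (by fun_prop) (by fun_prop)
  · exact isClosed_iInter fun U => isClosed_iInter fun V =>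
      isClosed_eq (by fun_prop) (by fun_prop)
  · exact isClosed_eq (by fun_prop) (by fun_prop)

lemma isCompact_isProbValuation : IsCompact {f : Opens Y → ℝ≥0 | IsProbValuation f} := by
  have hK : IsCompact (Set.univ.pi fun _ : Opens Y => Set.Icc (0 : ℝ≥0) 1) :=
    isCompact_univ_pi fun _ => isCompact_Icc
  have heq : {f : Opens Y → ℝ≥0 | IsProbValuation f} =
      {f : Opens Y → ℝ≥0 | f ⊥ = 0 ∧ (∀ U V : Opens Y, U ≤ V → f U ≤ f V) ∧
      (∀ U V : Opens Y, f (U ⊔ V) + f (U ⊓ V) = f U + f V) ∧ f ⊤ = 1} := by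
    ext f
    exact ⟨fun h => ⟨h.empty, h.mono, h.modular, h.total⟩,
      fun h => IsProbValuation.of_finite h.1 h.2.1 h.2.2.1 h.2.2.2⟩
  refine hK.of_isClosed_subset (heq ▸ isClosed_modular) fun f hf U _ => ?_
  exact ⟨zero_le, ProbVal.le_one ⟨f, hf⟩ U⟩

include hb in
/-- Finitely many valuations approximate all of them from below, uniformly up to `ε`. -/
lemma exists_finite_net {ε : ℝ≥0} (hε : 0 < ε) :
    ∃ M : Set (ProbVal Y), M.Finite ∧
      ∀ ν : ProbVal Y, ∃ m ∈ M, m ≤ ν ∧ ∀ U, ν.1 U ≤ m.1 U + ε := by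
  -- Near `ν`, the mixture with weight `t` is a good lower approximation when `1 - t < ε`.
  obtain ⟨t, ht, htε⟩ : ∃ t : ℝ≥0, t < 1 ∧ 1 < t + ε := by
    rcases le_or_gt ε 1 with h | h
    · refine ⟨1 - ε / 2, tsub_lt_self one_pos (half_pos hε), ?_⟩
      have h2 : ε / 2 ≤ 1 := (half_le_self hε.le).trans h
      calc (1 : ℝ≥0) = (1 - ε / 2) + ε / 2 := (tsub_add_cancel_of_le h2).symm
        _ < (1 - ε / 2) + ε := by gcongr; exact half_lt_self hε.ne'
    · exact ⟨0, one_pos, by simpa using h⟩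
  have hnear : ∀ f, ∀ hf : IsProbValuation f, ∀ᶠ g : Opens Y → ℝ≥0 in 𝓝 f,
      IsProbValuation g → (mixBot b hb t ht.le ⟨f, hf⟩).1 ≤ g ∧
        ∀ U, g U ≤ (mixBot b hb t ht.le ⟨f, hf⟩).1 U + ε := by
    intro f hf
    have hup : ∀ U : Opens Y, ∀ᶠ g : Opens Y → ℝ≥0 in 𝓝 f, g U < t * f U + ε := by
      intro U
      have hlt : f U < t * f U + ε := by
        have h1 : f U ≤ 1 := ProbVal.le_one ⟨f, hf⟩ U
        rcases eq_or_ne (f U) 0 with h0 | h0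
        · simpa [h0] using hε
        · calc f U = 1 * f U := (one_mul _).symm
            _ < (t + ε) * f U := mul_lt_mul_of_pos_right htε (pos_iff_ne_zero.2 h0)
            _ = t * f U + ε * f U := add_mul _ _ _
            _ ≤ t * f U + ε := by gcongr; exact mul_le_of_le_one_right (zero_le) h1
      exact (continuous_apply U).tendsto f |>.eventually (gt_mem_nhds hlt)
    filter_upwards [eventually_mixBot_le hb ht ⟨f, hf⟩, eventually_all.2 hup] with g h1 h2 hg
    refine ⟨h1 hg, fun U => (h2 U).le.trans ?_⟩
    gcongr
    exact mul_le_mixBot hb ht.le ⟨f, hf⟩ U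
  obtain ⟨s, hs⟩ := isCompact_isProbValuation.elim_nhds_subcover'
    (fun f hf => {g : Opens Y → ℝ≥0 | IsProbValuation g →
      (mixBot b hb t ht.le ⟨f, hf⟩).1 ≤ g ∧
        ∀ U, g U ≤ (mixBot b hb t ht.le ⟨f, hf⟩).1 U + ε}) hnear
  refine ⟨(fun f : {f : Opens Y → ℝ≥0 | IsProbValuation f} =>
    mixBot b hb t ht.le ⟨f.1, f.2⟩) '' (s : Set _), s.finite_toSet.image _, fun ν => ?_⟩
  have hν := hs ν.2
  simp only [Set.mem_iUnion] at hν
  obtain ⟨f, hfs, hf⟩ := hν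
  exact ⟨_, ⟨f, hfs, rfl⟩, (hf ν.2).1, (hf ν.2).2⟩

/-! ### Quasi-deflations -/

/-- The candidates for `ν` in a finite net `M`: the members `m` with `ν ≤ m + c`. -/
def netNear (M : Set (ProbVal Y)) (c : ℝ≥0) (ν : ProbVal Y) : Set (ProbVal Y) :=
  {m | m ∈ M ∧ ∀ U, ν.1 U ≤ m.1 U + c}

omit [Finite (Opens Y)] in
lemma upClos_mono {E F : Set (ProbVal Y)} (h : E ⊆ F) : upClos E ⊆ upClos F :=
  fun _ ⟨e, he, hx⟩ => ⟨e, h he, hx⟩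

/-- The map `ν ↦ ↑(netNear M c ν)` is a quasi-deflation: for each of the finitely many `m ∈ M`, the
set `{ν | ν ≤ m + c}` is Scott-closed. -/
lemma isQuasiDeflation_net {M : Set (ProbVal Y)} (hM : M.Finite) {c : ℝ≥0}
    (φ : ProbVal Y → FinCompacts (ProbVal Y)) (hφ : ∀ ν, (φ ν).1 = upClos (netNear M c ν))
    (hnet : ∀ ν, ∃ m ∈ netNear M c ν, m ≤ ν) : IsQuasiDeflation φ := by
  refine ⟨?_, fun ν => ?_, ?_⟩
  · refine @Continuous.mk _ _ (scottTop _) (scottTop _) φ fun V hV => ?_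
    have hVup : IsUpperSet V := hV.1
    refine ⟨fun ν μ hνμ hν => hVup (?_ : (φ μ).1 ⊆ (φ ν).1) hν, fun d hne hd a ha haV => ?_⟩
    · rw [hφ, hφ]
      exact upClos_mono fun m hm => ⟨hm.1, fun U => (hνμ U).trans (hm.2 U)⟩
    · have hev : ∀ᶠ z : d in atTop, ∀ m ∈ M,
          (∀ U, z.1.1 U ≤ m.1 U + c) → ∀ U, a.1 U ≤ m.1 U + c := by
        refine (eventually_all_finite hM).2 fun m _ => ?_
        by_cases hm : ∀ U, a.1 U ≤ m.1 U + c
        · exact Eventually.of_forall fun _ _ => hm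
        · push Not at hm
          obtain ⟨U, hU⟩ := hm
          have ht := (continuous_apply U).tendsto a.1 |>.comp (tendsto_of_isLUB hne hd ha)
          filter_upwards [ht.eventually (lt_mem_nhds hU)] with z hz hzle
          exact absurd (hzle U) (not_le.2 hz)
      obtain ⟨z, hz, hza⟩ := exists_mem_of_eventually hne hd
        (p := fun z => ∀ m ∈ M, (∀ U, z.1 U ≤ m.1 U + c) → ∀ U, a.1 U ≤ m.1 U + c) hev
      refine ⟨z, hz, hVup (?_ : (φ z).1 ⊆ (φ a).1) haV⟩
      rw [hφ, hφ]
      exact upClos_mono fun m hm => ⟨hm.1, hza m hm.1 hm.2⟩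
  · rw [hφ]
    exact hnet ν
  · refine Set.Finite.of_finite_image (f := Subtype.val) ?_ Subtype.val_injective.injOn
    refine (hM.finite_subsets.image upClos).subset ?_
    rintro _ ⟨_, ⟨ν, rfl⟩, rfl⟩
    exact ⟨netNear M c ν, fun m hm => hm.1, (hφ ν).symm⟩

include hb in
lemma isOmegaQRBDomain_probVal [Nonempty (ProbVal Y)] : IsOmegaQRBDomain (ProbVal Y) := by
  have hε : ∀ n : ℕ, (0 : ℝ≥0) < 1 / (n + 1) := fun n => by positivity
  choose M hM hnet using fun n : ℕ => exists_finite_net (Y := Y) hb (hε n)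
  have hnear : ∀ n ν, ∃ m ∈ netNear (M n) (2 * (1 / (n + 1))) ν, m ≤ ν := by
    intro n ν
    obtain ⟨m, hm, hmν, h⟩ := hnet n ν
    refine ⟨m, ⟨hm, fun U => (h U).trans ?_⟩, hmν⟩
    gcongr
    exact le_mul_of_one_le_left (hε n).le one_le_two
  let φ : ULift.{u} ℕ → ProbVal Y → FinCompacts (ProbVal Y) := fun n ν =>
    ⟨upClos (netNear (M n.down) (2 * (1 / (n.down + 1))) ν), _,
      (hM n.down).subset fun m hm => hm.1, (hnear n.down ν).imp fun _ h => h.1, rfl⟩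
  have hrefine : ∀ i k : ℕ, (2 * (1 / (k + 1)) : ℝ≥0) ≤ 1 / (i + 1) →
      ∀ ν, (φ ⟨k⟩ ν).1 ⊆ (φ ⟨i⟩ ν).1 := by
    rintro i k hik ν x ⟨m, hm, hmx⟩
    obtain ⟨m', hm', hle, h⟩ := hnet i m
    refine ⟨m', ⟨hm', fun U => ?_⟩, hle.trans hmx⟩
    calc ν.1 U ≤ m.1 U + 2 * (1 / (k + 1)) := hm.2 U
      _ ≤ (m'.1 U + 1 / (i + 1)) + 1 / (i + 1) := add_le_add (h U) hik
      _ = m'.1 U + 2 * (1 / (i + 1)) := by ring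
  have hsmall : ∀ i k : ℕ, 2 * i + 1 ≤ k → (2 * (1 / (k + 1)) : ℝ≥0) ≤ 1 / (i + 1) := by
    intro i k hik
    have : (2 * (i + 1) : ℝ≥0) ≤ k + 1 := by exact_mod_cast (by omega : 2 * (i + 1) ≤ k + 1)
    rw [mul_one_div, div_le_div_iff₀ (by positivity) (by positivity), one_mul]
    exact this
  obtain ⟨ν₀⟩ := ‹Nonempty (ProbVal Y)›
  refine ⟨isDcpo_probVal, ⟨mixBot b hb 0 zero_le ν₀, fun ν U => ?_⟩, ULift.{u} ℕ,
    inferInstance, φ, ⟨⟨0⟩⟩, fun i j => ?_, fun n => ?_, fun ν => ?_⟩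
  · by_cases h : b ∈ U
    · rw [ProbVal.eq_one_of_mem hb _ h, ProbVal.eq_one_of_mem hb _ h]
    · simp [mixBot, h]
  · exact ⟨⟨2 * max i.down j.down + 1⟩, hrefine i.down _ (hsmall _ _ (by omega)),
      hrefine j.down _ (hsmall _ _ (by omega))⟩
  · exact isQuasiDeflation_net (hM n.down) (φ n) (fun _ => rfl) (hnear n.down)
  · refine Set.Subset.antisymm (fun μ hμ U => ?_) (fun μ hμ => ?_)
    · rw [Set.mem_iInter] at hμ
      have hn : ∀ n : ℕ, ν.1 U ≤ μ.1 U + 2 * (1 / (n + 1)) := by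
        intro n
        obtain ⟨m, hm, hmμ⟩ := hμ ⟨n⟩
        exact (hm.2 U).trans (by gcongr; exact hmμ U)
      have hlim : Tendsto (fun n : ℕ => μ.1 U + 2 * (1 / ((n : ℝ≥0) + 1))) atTop
          (𝓝 (μ.1 U + 2 * 0)) :=
        (tendsto_one_div_add_atTop_nhds_zero_nat.const_mul 2).const_add _
      simpa using ge_of_tendsto' hlim hn
    · refine Set.mem_iInter.2 fun n => ?_
      obtain ⟨m, hm, hle⟩ := hnear n.down ν
      exact ⟨m, hm, hle.trans hμ⟩

open Classical in
include hb in
/-- The Dirac valuation at `b`. -/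
lemma nonempty_probVal : Nonempty (ProbVal Y) := by
  refine ⟨⟨fun U => if b ∈ U then 1 else 0, IsProbValuation.of_finite ?_ ?_ ?_ ?_⟩⟩
  · exact if_neg fun h => h
  · intro U V hUV
    by_cases hU : b ∈ U
    · have hV : b ∈ V := hUV hU
      simp [hU, hV]
    · simp [hU]
  · intro U V
    by_cases hU : b ∈ U
    · rw [hb U hU]; simp
    · by_cases hV : b ∈ V
      · rw [hb V hV]; simp [add_comm]
      · have h1 : b ∉ U ⊔ V := by
          intro h
          rcases h with h | h
          exacts [hU h, hV h]
        have h2 : b ∉ U ⊓ V := fun h => hU h.1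
        simp [hU, hV, h1, h2]
  · exact if_pos trivial

end FiniteOpens

/-- For every finite pointed poset `Y`, `V_1(Y)` is a continuous dcpo and an
ωQRB-domain. -/
theorem probVal_of_finite_pointed_poset {Y : Type u} [PartialOrder Y] [Finite Y]
    (hb : ∃ b : Y, ∀ x, b ≤ x) :
    letI : TopologicalSpace Y := scottTop Y
    IsContinuousDcpo (ProbVal Y) ∧ IsOmegaQRBDomain (ProbVal Y) := by
  let : TopologicalSpace Y := scottTop Y
  obtain ⟨b, hb⟩ := hb
  have : Finite (Opens Y) := Finite.of_injective _ (SetLike.coe_injective (A := Opens Y))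
  have hb' : ∀ U : Opens Y, b ∈ U → U = ⊤ := by
    intro U hU
    have hUp : IsUpperSet (U : Set Y) := (show ScottOpen (U : Set Y) from U.isOpen).1
    exact Opens.ext (Set.eq_univ_of_forall fun x => hUp (hb x) hU)
  have := nonempty_probVal hb'
  exact ⟨isContinuousDcpo_probVal hb', isOmegaQRBDomain_probVal hb'⟩
end
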